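/- Let G, G' ⊆ ℝ^d be finite sets with span(G) = span(G'). Then (relint(cone(G)) ∪ {0}) + (relint(cone(G')) ∪ {0}) = relint(cone(G ∪ G')) ∪ {0}, where + denotes Minkowski sum. (Key step in the proof of Theorem 3: the reachability sets of two cycles whose label sets have the same span combine into a single cone term.) -/

import Mathlib

open Pointwise

/-- The convex cone of a finite set `G ⊆ ℝ^d`: all nonnegative combinations
of elements of `G`. -/
def coneF {d : ℕ} (G : Finset (Fin d → ℝ)) : Set (Fin d → ℝ) :=
  {x | ∃ a : (Fin d → ℝ) → ℝ, (∀ v ∈ G, 0 ≤ a v) ∧ x = ∑ v ∈ G, a v • v}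

lemma coneF_add {d : ℕ} {G : Finset (Fin d → ℝ)} {x y : Fin d → ℝ} (hx : x ∈ coneF G)
    (hy : y ∈ coneF G) : x + y ∈ coneF G := by
  obtain ⟨a, ha, rfl⟩ := hx
  obtain ⟨b, hb, rfl⟩ := hy
  refine ⟨fun v => a v + b v, fun v hv => add_nonneg (ha v hv) (hb v hv), ?_⟩
  simp [add_smul, Finset.sum_add_distrib]

lemma coneF_smul {d : ℕ} {G : Finset (Fin d → ℝ)} {x : Fin d → ℝ} (hx : x ∈ coneF G)
    {t : ℝ} (ht : 0 ≤ t) : t • x ∈ coneF G := by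
  obtain ⟨a, ha, rfl⟩ := hx
  refine ⟨fun v => t * a v, fun v hv => mul_nonneg ht (ha v hv), ?_⟩
  simp [mul_smul, Finset.smul_sum]

lemma coneF_zero {d : ℕ} (G : Finset (Fin d → ℝ)) : (0 : Fin d → ℝ) ∈ coneF G :=
  ⟨fun _ => 0, fun _ _ => le_rfl, by simp⟩

lemma coneF_gen {d : ℕ} {G : Finset (Fin d → ℝ)} {v : Fin d → ℝ} (hv : v ∈ G) :
    v ∈ coneF G := by
  classical
  refine ⟨fun w => if w = v then 1 else 0, fun w _ => by dsimp only; split_ifs <;> norm_num, ?_⟩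
  simp [ite_smul, hv]

lemma coneF_sub_span {d : ℕ} {G : Finset (Fin d → ℝ)} {x : Fin d → ℝ} (hx : x ∈ coneF G) :
    x ∈ Submodule.span ℝ (G : Set (Fin d → ℝ)) := by
  obtain ⟨a, ha, rfl⟩ := hx
  exact Submodule.sum_mem _ fun v hv =>
    Submodule.smul_mem _ _ (Submodule.subset_span (by simpa using hv))

lemma coneF_sum_mem {d : ℕ} {G H : Finset (Fin d → ℝ)} {a : (Fin d → ℝ) → ℝ}
    (ha : ∀ v ∈ H, 0 ≤ a v) (h : H ⊆ G) : ∑ v ∈ H, a v • v ∈ coneF G :=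
  Finset.sum_induction _ (· ∈ coneF G) (fun _ _ => coneF_add) (coneF_zero G)
    fun v hv => coneF_smul (coneF_gen (h hv)) (ha v hv)

lemma coneF_mono {d : ℕ} {G H : Finset (Fin d → ℝ)} (h : H ⊆ G) : coneF H ⊆ coneF G := by
  rintro _ ⟨a, ha, rfl⟩
  exact coneF_sum_mem ha h

lemma coneF_split {d : ℕ} [DecidableEq (Fin d → ℝ)] {G H : Finset (Fin d → ℝ)}
    {x : Fin d → ℝ} (hx : x ∈ coneF (G ∪ H)) :
    ∃ y ∈ coneF G, ∃ z ∈ coneF H, x = y + z := by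
  obtain ⟨a, ha, rfl⟩ := hx
  refine ⟨∑ v ∈ G, a v • v, coneF_sum_mem (fun v hv => ha v (by simp [hv])) subset_rfl,
    ∑ v ∈ H \ G, a v • v, coneF_sum_mem (fun v hv => ha v ?_) Finset.sdiff_subset, ?_⟩
  · simp at hv; simp [hv]
  · rw [← Finset.sum_union Finset.disjoint_sdiff, Finset.union_sdiff_self_eq_union]

lemma coneF_affineSpan {d : ℕ} (G : Finset (Fin d → ℝ)) (x : Fin d → ℝ) :
    x ∈ affineSpan ℝ (coneF G) ↔ x ∈ Submodule.span ℝ (G : Set (Fin d → ℝ)) := by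
  have h1 : affineSpan ℝ (coneF G) = (Submodule.span ℝ (coneF G)).toAffineSubspace := by
    conv_lhs => rw [← Set.insert_eq_of_mem (coneF_zero G)]
    apply SetLike.coe_injective
    rw [affineSpan_insert_zero]; rfl
  have h2 : Submodule.span ℝ (coneF G) = Submodule.span ℝ (G : Set (Fin d → ℝ)) := by
    apply le_antisymm
    · exact Submodule.span_le.2 fun x hx => coneF_sub_span hx
    · exact Submodule.span_mono fun x hx => coneF_gen (by simpa using hx)
  rw [h1, h2]; rfl

lemma relint_iff {d : ℕ} (G : Finset (Fin d → ℝ)) (x : Fin d → ℝ) :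
    x ∈ intrinsicInterior ℝ (coneF G) ↔
      x ∈ Submodule.span ℝ (G : Set (Fin d → ℝ)) ∧ ∃ ε > 0,
        ∀ y ∈ Submodule.span ℝ (G : Set (Fin d → ℝ)), dist y x < ε → y ∈ coneF G := by
  rw [mem_intrinsicInterior]
  constructor
  · rintro ⟨⟨y, hy⟩, hy', rfl⟩
    refine ⟨(coneF_affineSpan G y).1 hy, ?_⟩
    rw [mem_interior_iff_mem_nhds, Metric.mem_nhds_iff] at hy'
    obtain ⟨ε, hε, h⟩ := hy'
    refine ⟨ε, hε, fun z hz hd => ?_⟩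
    exact @h ⟨z, (coneF_affineSpan G z).2 hz⟩ hd
  · rintro ⟨hx, ε, hε, h⟩
    refine ⟨⟨x, (coneF_affineSpan G x).2 hx⟩, ?_, rfl⟩
    rw [mem_interior_iff_mem_nhds, Metric.mem_nhds_iff]
    refine ⟨ε, hε, fun z hz => ?_⟩
    exact h z ((coneF_affineSpan G z).1 z.2) hz

lemma relint_add {d : ℕ} {G : Finset (Fin d → ℝ)} {x c : Fin d → ℝ}
    (hx : x ∈ intrinsicInterior ℝ (coneF G)) (hc : c ∈ coneF G) :
    c + x ∈ intrinsicInterior ℝ (coneF G) := by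
  rw [relint_iff] at hx ⊢
  obtain ⟨hx, ε, hε, h⟩ := hx
  refine ⟨add_mem (coneF_sub_span hc) hx, ε, hε, fun y hy hd => ?_⟩
  have := coneF_add hc (h (y - c) (sub_mem hy (coneF_sub_span hc)) (by
    rw [dist_eq_norm] at hd ⊢
    rwa [sub_sub]))
  simpa using this

lemma relint_smul {d : ℕ} {G : Finset (Fin d → ℝ)} {x : Fin d → ℝ}
    (hx : x ∈ intrinsicInterior ℝ (coneF G)) {t : ℝ} (ht : 0 < t) :
    t • x ∈ intrinsicInterior ℝ (coneF G) := by
  rw [relint_iff] at hx ⊢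
  obtain ⟨hx, ε, hε, h⟩ := hx
  refine ⟨Submodule.smul_mem _ _ hx, t * ε, mul_pos ht hε, fun y hy hd => ?_⟩
  have e : y = t • (t⁻¹ • y) := by rw [smul_smul, mul_inv_cancel₀ ht.ne', one_smul]
  rw [e]
  refine coneF_smul (h _ (Submodule.smul_mem _ _ hy) ?_) ht.le
  rw [e, dist_smul₀, Real.norm_of_nonneg ht.le] at hd
  exact lt_of_mul_lt_mul_left hd ht.le

lemma relint_nonempty {d : ℕ} (G : Finset (Fin d → ℝ)) :
    ∃ g, g ∈ intrinsicInterior ℝ (coneF G) := by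
  refine Set.Nonempty.intrinsicInterior ?_ ⟨0, coneF_zero G⟩
  intro x hx y hy a b ha hb _
  exact coneF_add (coneF_smul hx ha) (coneF_smul hy hb)

lemma relint_mono {d : ℕ} {G H : Finset (Fin d → ℝ)} (h : G ⊆ H)
    (hs : Submodule.span ℝ (H : Set (Fin d → ℝ)) = Submodule.span ℝ (G : Set (Fin d → ℝ))) :
    intrinsicInterior ℝ (coneF G) ⊆ intrinsicInterior ℝ (coneF H) := by
  intro x hx
  rw [relint_iff] at hx ⊢
  rw [hs]
  obtain ⟨hx, ε, hε, h'⟩ := hx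
  exact ⟨hx, ε, hε, fun y hy hd => coneF_mono h (h' y hy hd)⟩

/-- key step in Theorem 3. For finite sets `G, G' ⊆ ℝ^d`
with the same linear span,
`(relint(cone(G)) ∪ {0}) + (relint(cone(G')) ∪ {0})
  = relint(cone(G ∪ G')) ∪ {0}` (Minkowski sum). -/
theorem relint_cone_union_zero_add (d : ℕ) (hd : 1 ≤ d)
    [DecidableEq (Fin d → ℝ)] (G G' : Finset (Fin d → ℝ))
    (hspan : Submodule.span ℝ (G : Set (Fin d → ℝ)) =
      Submodule.span ℝ (G' : Set (Fin d → ℝ))) :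
    (intrinsicInterior ℝ (coneF G) ∪ {0}) +
        (intrinsicInterior ℝ (coneF G') ∪ {0}) =
      intrinsicInterior ℝ (coneF (G ∪ G')) ∪ {0} := by
  have hU : Submodule.span ℝ ((G ∪ G' : Finset (Fin d → ℝ)) : Set (Fin d → ℝ)) =
      Submodule.span ℝ (G : Set (Fin d → ℝ)) := by
    rw [Finset.coe_union, Submodule.span_union, ← hspan, sup_idem]
  have m1 := relint_mono (G := G) (H := G ∪ G') Finset.subset_union_left hU
  have m2 := relint_mono (G := G') (H := G ∪ G') Finset.subset_union_right (hU.trans hspan)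
  apply Set.Subset.antisymm
  · rintro _ ⟨x, hx, y, hy, rfl⟩
    rcases hx with hx | hx
    · rcases hy with hy | hy
      · exact Or.inl (relint_add (m2 hy) (intrinsicInterior_subset (m1 hx)))
      · rw [Set.mem_singleton_iff] at hy
        subst hy
        left
        simpa using m1 hx
    · rw [Set.mem_singleton_iff] at hx
      subst hx
      rcases hy with hy | hy
      · left
        simpa using m2 hy
      · rw [Set.mem_singleton_iff] at hy
        subst hy
        right
        simp
  · rintro x (hx | hx)
    · obtain ⟨g, hg⟩ := relint_nonempty G
      obtain ⟨g', hg'⟩ := relint_nonempty G'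
      obtain ⟨hxL, ε, hε, h⟩ := (relint_iff _ _).1 hx
      have hn : 0 < ‖g + g'‖ + 1 := by positivity
      have ht : 0 < ε / (‖g + g'‖ + 1) := by positivity
      set t := ε / (‖g + g'‖ + 1) with htdef
      have hgL := coneF_sub_span (intrinsicInterior_subset (m1 hg))
      have hgL' := coneF_sub_span (intrinsicInterior_subset (m2 hg'))
      have hD := h (x - t • (g + g'))
        (sub_mem hxL (Submodule.smul_mem _ _ (add_mem hgL hgL'))) (by
          rw [dist_eq_norm, sub_sub_cancel_left, norm_neg, norm_smul,
            Real.norm_of_nonneg ht.le, htdef, div_mul_eq_mul_div, div_lt_iff₀ hn]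
          nlinarith)
      obtain ⟨y, hy, z, hz, e⟩ := coneF_split hD
      refine ⟨y + t • g, Or.inl (relint_add (relint_smul hg ht) hy),
        z + t • g', Or.inl (relint_add (relint_smul hg' ht) hz), ?_⟩
      have : x = y + z + t • (g + g') := by rw [← e]; simp
      rw [this, smul_add]
      dsimp only
      abel
    · exact ⟨0, Or.inr rfl, 0, Or.inr rfl, by simpa using hx.symm⟩
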